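/- Tamper sets are overapproximated by tamper places: let D = C(t,p,φ,e) be the data flow semantics of a Copland phrase. If π = ⟨v1,…,vn⟩ is a path of D starting with a measurement event, then ts(π) ⊆ τ(ε(vn)). -/

import Mathlib

namespace Copland

/-- Places are drawn from a countable set. -/
abbrev Place := ℕ
/-- Symbols (measurement/target identifiers) are drawn from a countable set. -/
abbrev Symb := ℕ

/-- Splitting specifications: `+` or `-`. -/
inductive Split where
  | plus
  | minus
deriving DecidableEq, Repr

/-- Copland phrases. -/
inductive Phrase where
  | meas : Symb → Place → Symb → Phrase          -- measurement  m q s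
  | att  : Place → Phrase → Phrase               -- @_q [ t ]
  | copy : Phrase                                 -- _
  | sign : Phrase                                 -- !
  | hash : Phrase                                 -- #
  | lseq : Phrase → Phrase → Phrase               -- t1 → t2
  | bseq : Split → Split → Phrase → Phrase → Phrase  -- t1 d1<d2 t2
  | bpar : Split → Split → Phrase → Phrase → Phrase  -- t1 d1~d2 t2
deriving DecidableEq, Repr

/-- Evidence terms. -/
inductive Evidence where
  | empty : Evidence                                          -- ξ
  | meas : Symb → Place → Symb → Place → List ℕ → Evidence → Evidence  -- m(ms(m,q,s),p,φ,e)
  | sig  : Evidence → Place → Evidence                        -- [[e]]_p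
  | hash : Evidence → Place → Evidence                        -- #{e}_p
  | seqc : Evidence → Evidence → Evidence                     -- e1 ;; e2
  | parc : Evidence → Evidence → Evidence                     -- e1 || e2
deriving DecidableEq, Repr

/-- The effect `d(e)` of a splitting specification on evidence. -/
def splitEv : Split → Evidence → Evidence
  | .plus, e => e
  | .minus, _ => .empty

/-- The Copland evidence semantics `E(t,p,φ,e)`. -/
def eval : Phrase → Place → List ℕ → Evidence → Evidence
  | .meas m q s, p, φ, e => .meas m q s p φ e
  | .copy, _, _, e => e
  | .sign, p, _, e => .sig e p
  | .hash, p, _, e => .hash e p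
  | .att q t, _, φ, e => eval t q (1 :: φ) e
  | .lseq t1 t2, p, φ, e => eval t2 p (2 :: φ) (eval t1 p (1 :: φ) e)
  | .bseq d1 d2 t1 t2, p, φ, e =>
      .seqc (eval t1 p (1 :: φ) (splitEv d1 e)) (eval t2 p (2 :: φ) (splitEv d2 e))
  | .bpar d1 d2 t1 t2, p, φ, e =>
      .parc (eval t1 p (1 :: φ) (splitEv d1 e)) (eval t2 p (2 :: φ) (splitEv d2 e))

/-- Join operators: sequential `<` or parallel `~`. -/
inductive JoinOp where
  | seqJ
  | parJ
deriving DecidableEq, Repr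

/-- Event labels. -/
inductive Label where
  | msp   : Place → Evidence → Label                    -- p : msp(e)
  | cpy   : Place → Evidence → Label                    -- p : cpy(e)
  | sig   : Place → Evidence → Label                    -- p : sig(e)
  | hsh   : Place → Evidence → Label                    -- p : hsh(e)
  | req   : Place → Place → Evidence → Label            -- p : req(q,e)
  | rpy   : Place → Place → Evidence → Label            -- p : rpy(q,e)
  | split : Place → Split → Split → Evidence → Label    -- p : split(d1,d2,e)
  | join  : Place → JoinOp → Evidence → Label           -- p : join(o,e)
deriving DecidableEq, Repr

/-- The (sending) place `ϱ(v)`: the place before the colon in the label. -/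
def Label.place : Label → Place
  | .msp p _ => p
  | .cpy p _ => p
  | .sig p _ => p
  | .hsh p _ => p
  | .req p _ _ => p
  | .rpy p _ _ => p
  | .split p _ _ _ => p
  | .join p _ _ => p

/-- The receiving place `ϱ'(v)`. -/
def Label.recvPlace : Label → Place
  | .req _ q _ => q
  | .rpy _ q _ => q
  | l => l.place

/-- The evidence `ε(v)`: the last argument of the label. -/
def Label.evid : Label → Evidence
  | .msp _ e => e
  | .cpy _ e => e
  | .sig _ e => e
  | .hsh _ e => e
  | .req _ _ e => e
  | .rpy _ _ e => e
  | .split _ _ _ e => e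
  | .join _ _ e => e

/-- A measurement event is one whose label has the form `p : msp(e)`. -/
def Label.IsMeas (l : Label) : Prop := ∃ p e, l = .msp p e

/-- A cross-place communication event is one with `ϱ(v) ≠ ϱ'(v)`. -/
def Label.IsCross (l : Label) : Prop := l.place ≠ l.recvPlace

/-- A data flow graph: events are the naturals `0, …, n-1`, with an input event,
an output event, flow edges, and a labeling. -/
structure DFG where
  n : ℕ
  vin : ℕ
  vout : ℕ
  edges : List (ℕ × ℕ)
  label : ℕ → Label

namespace DFG

/-- Well-formedness of a data flow graph: events are in range, the flow
relation is acyclic, and there is no edge into the input event nor out of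
the output event. -/
def WF (G : DFG) : Prop :=
  G.vin < G.n ∧ G.vout < G.n ∧
  (∀ pr ∈ G.edges, pr.1 < G.n ∧ pr.2 < G.n) ∧
  (∀ v, ¬ Relation.TransGen (fun a b => (a, b) ∈ G.edges) v v) ∧
  (∀ pr ∈ G.edges, pr.2 ≠ G.vin ∧ pr.1 ≠ G.vout)

/-- The single-event data flow graph. -/
def single (l : Label) : DFG :=
  { n := 1, vin := 0, vout := 0, edges := [], label := fun _ => l }

/-- Before-copy composition: the second graph's events are renumbered after the
first's, and a flow edge links the output of the first to the input of the second. -/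
def seqComp (G1 G2 : DFG) : DFG :=
  { n := G1.n + G2.n
    vin := G1.vin
    vout := G1.n + G2.vout
    edges := G1.edges ++ G2.edges.map (fun pr => (G1.n + pr.1, G1.n + pr.2)) ++
      [(G1.vout, G1.n + G2.vin)]
    label := fun i => if i < G1.n then G1.label i else G2.label (i - G1.n) }

/-- Branching composition: a split event, the two subgraphs (with a flow edge from
the split into the input of a subgraph exactly when the corresponding splitting
specification is `+`), and a join event receiving flow from both outputs. -/
def branch (sp jn : Label) (d1 d2 : Split) (G1 G2 : DFG) : DFG :=
  { n := G1.n + G2.n + 2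
    vin := 0
    vout := G1.n + G2.n + 1
    edges :=
      G1.edges.map (fun pr => (pr.1 + 1, pr.2 + 1)) ++
      G2.edges.map (fun pr => (pr.1 + 1 + G1.n, pr.2 + 1 + G1.n)) ++
      (if d1 = Split.plus then [(0, G1.vin + 1)] else []) ++
      (if d2 = Split.plus then [(0, G2.vin + 1 + G1.n)] else []) ++
      [(G1.vout + 1, G1.n + G2.n + 1), (G2.vout + 1 + G1.n, G1.n + G2.n + 1)]
    label := fun i =>
      if i = 0 then sp
      else if i < G1.n + 1 then G1.label (i - 1)
      else if i < G1.n + G2.n + 1 then G2.label (i - 1 - G1.n)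
      else jn }

end DFG

/-- The Copland data flow semantics `C(t,p,φ,e)`. -/
def sem : Phrase → Place → List ℕ → Evidence → DFG
  | .meas m q s, p, φ, e => .single (.msp p (.meas m q s p φ e))
  | .copy, p, _, e => .single (.cpy p e)
  | .sign, p, _, e => .single (.sig p (.sig e p))
  | .hash, p, _, e => .single (.hsh p (.hash e p))
  | .att q t, p, φ, e =>
      (DFG.single (.req p q e)).seqComp
        ((sem t q (1 :: φ) e).seqComp (.single (.rpy q p (eval t q (1 :: φ) e))))
  | .lseq t1 t2, p, φ, e =>
      (sem t1 p (1 :: φ) e).seqComp (sem t2 p (2 :: φ) (eval t1 p (1 :: φ) e))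
  | .bseq d1 d2 t1 t2, p, φ, e =>
      DFG.branch (.split p d1 d2 e)
        (.join p .seqJ (eval (.bseq d1 d2 t1 t2) p φ e)) d1 d2
        (sem t1 p (1 :: φ) (splitEv d1 e)) (sem t2 p (2 :: φ) (splitEv d2 e))
  | .bpar d1 d2 t1 t2, p, φ, e =>
      DFG.branch (.split p d1 d2 e)
        (.join p .parJ (eval (.bpar d1 d2 t1 t2) p φ e)) d1 d2
        (sem t1 p (1 :: φ) (splitEv d1 e)) (sem t2 p (2 :: φ) (splitEv d2 e))

namespace DFG

/-- A path of a data flow graph: a nonempty sequence of events of the graph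
successively related by flow edges. -/
def IsPath (G : DFG) (π : List ℕ) : Prop :=
  π ≠ [] ∧ (∀ v ∈ π, v < G.n) ∧ π.Chain' (fun a b => (a, b) ∈ G.edges)

/-- One step of the tamper set computation. -/
def tsStep (G : DFG) (s : Set Place) (v : ℕ) : Set Place :=
  match G.label v with
  | .sig p _ => {p} ∩ s
  | _ => s

/-- The tamper set `ts(π)` of a path: `ts(⟨v⟩)` is the set of all places if `v` is a
measurement event and `∅` otherwise; `ts(π § v) = {p} ∩ ts(π)` if `ℓ(v) = p:sig(e)`,
and `ts(π § v) = ts(π)` otherwise. -/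
def ts (G : DFG) (π : List ℕ) : Set Place :=
  match π with
  | [] => ∅
  | v :: rest =>
      rest.foldl (tsStep G)
        (match G.label v with
          | .msp _ _ => Set.univ
          | _ => ∅)

/-- A path is `p`-signing iff every signature event on it occurs at `p`. -/
def Signing (G : DFG) (π : List ℕ) (p : Place) : Prop :=
  ∀ v ∈ π, ∀ q e, G.label v = .sig q e → q = p

/-- A path `π = ⟨v, …, v'⟩` permits tampering (at `v'` with the evidence from `v`)
iff (1) `v` is a measurement event, (2) the length of `π` exceeds 1, and
(3) `π` is `ϱ(v')`-signing or `ϱ'(v')`-signing. -/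
def PermitsTamper (G : DFG) (π : List ℕ) : Prop :=
  (∀ v, π.head? = some v → (G.label v).IsMeas) ∧
  1 < π.length ∧
  (∀ v', π.getLast? = some v' →
    G.Signing π (G.label v').place ∨ G.Signing π (G.label v').recvPlace)

/-- A path `⟨v1,…,vn⟩` is local to place `p` iff every interior event has both
sending and receiving place `p`, and each endpoint has sending or receiving place `p`. -/
def LocalTo (G : DFG) (π : List ℕ) (p : Place) : Prop :=
  (∀ i v, 0 < i → i + 1 < π.length → π[i]? = some v →
      (G.label v).place = p ∧ (G.label v).recvPlace = p) ∧
  (∀ v, π.head? = some v → (G.label v).place = p ∨ (G.label v).recvPlace = p) ∧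
  (∀ v, π.getLast? = some v → (G.label v).place = p ∨ (G.label v).recvPlace = p)

/-- `π` is a path of `G` from `v` to `v'`. -/
def PathBetween (G : DFG) (v v' : ℕ) (π : List ℕ) : Prop :=
  G.IsPath π ∧ π.head? = some v ∧ π.getLast? = some v'

/-- A set `S` of events of `G` is a tamper strategy for `v` iff every path from `v`
to the output event of `G` contains an event `v' ∈ S` such that the prefix
`⟨v, …, v'⟩` of the path permits tampering. -/
def TamperStrategy (G : DFG) (S : Set ℕ) (v : ℕ) : Prop :=
  (∀ w ∈ S, w < G.n) ∧
  ∀ π, G.PathBetween v G.vout π →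
    ∃ v' ∈ S, ∃ π', π' <+: π ∧ π'.getLast? = some v' ∧ G.PermitsTamper π'

/-- `S` is a minimal tamper strategy for `v` iff it is a tamper strategy for `v` and
every tamper strategy for `v` included in `S` equals `S`. -/
def MinimalTamperStrategy (G : DFG) (S : Set ℕ) (v : ℕ) : Prop :=
  G.TamperStrategy S v ∧ ∀ S', G.TamperStrategy S' v → S' ⊆ S → S' = S

/-- A path `π = ⟨v1,…,vn⟩` is protected iff either `v1` is not a measurement event,
or for every `1 < i ≤ n`, if `vi` is a cross-place communication event then
`ts(⟨v1,…,vi⟩) ⊆ {ϱ(vi)}`. -/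
def ProtectedPath (G : DFG) (π : List ℕ) : Prop :=
  (∀ v, π.head? = some v → ¬ (G.label v).IsMeas) ∨
  (∀ i v, 0 < i → i < π.length → π[i]? = some v → (G.label v).IsCross →
      G.ts (π.take (i + 1)) ⊆ {(G.label v).place})

/-- A data flow graph is protected iff all of its paths are protected. -/
def Protected (G : DFG) : Prop :=
  ∀ π, G.IsPath π → G.ProtectedPath π

end DFG

/-- The tamper places function `τ` on evidence. -/
def tau : Evidence → Set Place
  | .empty => ∅
  | .meas _ _ _ _ _ _ => Set.univ
  | .hash e _ => tau e
  | .sig e p => {p} ∩ tau e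
  | .seqc e1 e2 => tau e1 ∪ tau e2
  | .parc e1 e2 => tau e1 ∪ tau e2

open scoped Classical in
/-- The Evidence Protection Program `epp(t,p,e)`. -/
noncomputable def epp : Phrase → Place → Evidence → Phrase
  | .meas m q s, _, _ => .meas m q s
  | .copy, _, _ => .copy
  | .sign, _, _ => .sign
  | .hash, _, _ => .hash
  | .lseq t1 t2, p, e =>
      .lseq (epp t1 p e) (epp t2 p (eval (epp t1 p e) p [] e))
  | .att q t, p, e =>
      if q = p then .att q (epp t p e)
      else if tau e ⊆ {p} then
        if tau (eval (epp t q e) q [] e) ⊆ {q} then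
          .att q (epp t q e)
        else
          .att q (.lseq (epp t q e) .sign)
      else
        if tau (eval (epp t q (.sig e p)) q [] (.sig e p)) ⊆ {q} then
          .lseq .sign (.att q (epp t q (.sig e p)))
        else
          .lseq .sign (.att q (.lseq (epp t q (.sig e p)) .sign))
  | .bseq d1 d2 t1 t2, p, e =>
      .bseq d1 d2 (epp t1 p (splitEv d1 e)) (epp t2 p (splitEv d2 e))
  | .bpar d1 d2 t1 t2, p, e =>
      .bpar d1 d2 (epp t1 p (splitEv d1 e)) (epp t2 p (splitEv d2 e))

end Copland
namespace Copland

/-- The effect on a tamper set of passing through an event with the given label. -/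
def Label.tamper : Label → Set Place → Set Place
  | .sig p _, s => {p} ∩ s
  | _, s => s

theorem Label.tamper_mono (l : Label) {s s' : Set Place} (h : s ⊆ s') :
    l.tamper s ⊆ l.tamper s' := by
  cases l <;> first | exact h | exact Set.inter_subset_inter_right _ h

namespace DFG

/-- `G` consumes evidence `ein` at its input, produces `eout` at its output, and the
tamper places of its labels overapproximate the tamper sets at every event and edge. -/
structure TauSound (G : DFG) (ein eout : Evidence) : Prop where
  vin_lt : G.vin < G.n
  vout_lt : G.vout < G.n
  edge_lt : ∀ u v, (u, v) ∈ G.edges → u < G.n ∧ v < G.n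
  meas : ∀ v, (G.label v).IsMeas → tau (G.label v).evid = Set.univ
  edge : ∀ u v, (u, v) ∈ G.edges →
    (G.label v).tamper (tau (G.label u).evid) ⊆ tau (G.label v).evid
  input : (G.label G.vin).tamper (tau ein) ⊆ tau (G.label G.vin).evid
  output : (G.label G.vout).evid = eout

theorem TauSound.single {l : Label} {ein : Evidence}
    (hm : l.IsMeas → tau l.evid = Set.univ) (hi : l.tamper (tau ein) ⊆ tau l.evid) :
    (DFG.single l).TauSound ein l.evid where
  vin_lt := Nat.one_pos
  vout_lt := Nat.one_pos
  edge_lt := by simp [DFG.single]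
  meas _ := hm
  edge := by simp [DFG.single]
  input := hi
  output := rfl

theorem seqComp_label_left {G1 G2 : DFG} {i : ℕ} (h : i < G1.n) :
    (G1.seqComp G2).label i = G1.label i := if_pos h

theorem seqComp_label_right (G1 G2 : DFG) (i : ℕ) :
    (G1.seqComp G2).label (G1.n + i) = G2.label i := by
  simp [seqComp]

theorem TauSound.seqComp {G1 G2 : DFG} {e1 e2 e3 : Evidence}
    (h1 : G1.TauSound e1 e2) (h2 : G2.TauSound e2 e3) :
    (G1.seqComp G2).TauSound e1 e3 where
  vin_lt := Nat.lt_add_right _ h1.vin_lt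
  vout_lt := Nat.add_lt_add_left h2.vout_lt _
  edge_lt u v huv := by
    simp only [DFG.seqComp, List.mem_append, List.mem_map, List.mem_singleton,
      Prod.mk.injEq, Prod.exists] at huv ⊢
    rcases huv with (huv | ⟨a, b, hab, rfl, rfl⟩) | ⟨rfl, rfl⟩
    · have := h1.edge_lt _ _ huv
      omega
    · have := h2.edge_lt _ _ hab
      omega
    · have := h1.vout_lt
      have := h2.vin_lt
      omega
  meas v := by
    simp only [DFG.seqComp]
    split_ifs
    · exact h1.meas _
    · exact h2.meas _
  edge u v huv := by
    simp only [DFG.seqComp, List.mem_append, List.mem_map, List.mem_singleton,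
      Prod.mk.injEq, Prod.exists] at huv
    rcases huv with (huv | ⟨a, b, hab, rfl, rfl⟩) | ⟨rfl, rfl⟩
    · rw [seqComp_label_left (h1.edge_lt _ _ huv).1, seqComp_label_left (h1.edge_lt _ _ huv).2]
      exact h1.edge _ _ huv
    · rw [seqComp_label_right, seqComp_label_right]
      exact h2.edge _ _ hab
    · rw [seqComp_label_left h1.vout_lt, seqComp_label_right, h1.output]
      exact h2.input
  input := by
    change ((G1.seqComp G2).label G1.vin).tamper _ ⊆ tau ((G1.seqComp G2).label G1.vin).evid
    rw [seqComp_label_left h1.vin_lt]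
    exact h1.input
  output := by
    change ((G1.seqComp G2).label (G1.n + G2.vout)).evid = e3
    rw [seqComp_label_right, h2.output]

section Branch

variable {sp jn : Label} {d1 d2 : Split} {G1 G2 : DFG}

theorem branch_label_split : (branch sp jn d1 d2 G1 G2).label 0 = sp := rfl

theorem branch_label_left {i : ℕ} (h : i < G1.n) :
    (branch sp jn d1 d2 G1 G2).label (i + 1) = G1.label i := by
  simp [branch, h]

theorem branch_label_right {i : ℕ} (h : i < G2.n) :
    (branch sp jn d1 d2 G1 G2).label (i + 1 + G1.n) = G2.label i := by
  have h' : i + 1 + G1.n < G1.n + G2.n + 1 := by omega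
  have h'' : ¬ i + 1 + G1.n < G1.n + 1 := by omega
  have hi : i + 1 + G1.n - 1 - G1.n = i := by omega
  simp only [branch]
  rw [if_neg (by omega), if_neg h'', if_pos h', hi]

theorem branch_label_join :
    (branch sp jn d1 d2 G1 G2).label (G1.n + G2.n + 1) = jn := by
  simp [branch]

theorem branch_edge_cases {u v : ℕ} (h : (u, v) ∈ (branch sp jn d1 d2 G1 G2).edges) :
    (∃ a b, (a, b) ∈ G1.edges ∧ u = a + 1 ∧ v = b + 1) ∨
    (∃ a b, (a, b) ∈ G2.edges ∧ u = a + 1 + G1.n ∧ v = b + 1 + G1.n) ∨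
    (d1 = .plus ∧ u = 0 ∧ v = G1.vin + 1) ∨
    (d2 = .plus ∧ u = 0 ∧ v = G2.vin + 1 + G1.n) ∨
    (u = G1.vout + 1 ∧ v = G1.n + G2.n + 1) ∨
    (u = G2.vout + 1 + G1.n ∧ v = G1.n + G2.n + 1) := by
  simp only [branch, List.mem_append, List.mem_map, Prod.exists, Prod.mk.injEq,
    List.mem_ite_nil_right, List.mem_cons, List.not_mem_nil, or_false] at h
  rcases h with (((⟨a, b, hab, rfl, rfl⟩ | ⟨a, b, hab, rfl, rfl⟩) | h) | h) | h | h
  · exact .inl ⟨a, b, hab, rfl, rfl⟩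
  · exact .inr (.inl ⟨a, b, hab, rfl, rfl⟩)
  all_goals tauto

theorem TauSound.branch {e o1 o2 : Evidence}
    (h1 : G1.TauSound (splitEv d1 e) o1) (h2 : G2.TauSound (splitEv d2 e) o2)
    (hsp : ¬ sp.IsMeas) (hjn : ¬ jn.IsMeas) (hspt : ∀ s, sp.tamper s = s)
    (hjnt : ∀ s, jn.tamper s = s) (hspe : sp.evid = e)
    (ho1 : tau o1 ⊆ tau jn.evid) (ho2 : tau o2 ⊆ tau jn.evid) :
    (DFG.branch sp jn d1 d2 G1 G2).TauSound e jn.evid where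
  vin_lt := Nat.succ_pos _
  vout_lt := Nat.lt_succ_self _
  edge_lt u v huv := by
    change u < G1.n + G2.n + 2 ∧ v < G1.n + G2.n + 2
    have := h1.vin_lt
    have := h1.vout_lt
    have := h2.vin_lt
    have := h2.vout_lt
    rcases branch_edge_cases huv with ⟨a, b, hab, rfl, rfl⟩ | ⟨a, b, hab, rfl, rfl⟩ | h
    · have := h1.edge_lt _ _ hab
      omega
    · have := h2.edge_lt _ _ hab
      omega
    · omega
  meas v := by
    simp only [DFG.branch]
    split_ifs
    · exact fun h => absurd h hsp
    · exact h1.meas _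
    · exact h2.meas _
    · exact fun h => absurd h hjn
  edge u v huv := by
    rcases branch_edge_cases huv with ⟨a, b, hab, rfl, rfl⟩ | ⟨a, b, hab, rfl, rfl⟩ |
      ⟨rfl, rfl, rfl⟩ | ⟨rfl, rfl, rfl⟩ | ⟨rfl, rfl⟩ | ⟨rfl, rfl⟩
    · rw [branch_label_left (h1.edge_lt _ _ hab).1, branch_label_left (h1.edge_lt _ _ hab).2]
      exact h1.edge _ _ hab
    · rw [branch_label_right (h2.edge_lt _ _ hab).1, branch_label_right (h2.edge_lt _ _ hab).2]
      exact h2.edge _ _ hab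
    · rw [branch_label_split, branch_label_left h1.vin_lt, hspe]
      exact h1.input
    · rw [branch_label_split, branch_label_right h2.vin_lt, hspe]
      exact h2.input
    · rw [branch_label_left h1.vout_lt, branch_label_join, hjnt, h1.output]
      exact ho1
    · rw [branch_label_right h2.vout_lt, branch_label_join, hjnt, h2.output]
      exact ho2
  input := by
    change sp.tamper (tau e) ⊆ tau sp.evid
    rw [hspt, hspe]
  output := congrArg Label.evid branch_label_join

end Branch

theorem tsStep_eq_tamper (G : DFG) (s : Set Place) (v : ℕ) :
    G.tsStep s v = (G.label v).tamper s := by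
  unfold tsStep Label.tamper
  cases G.label v <;> rfl

theorem TauSound.foldl_tsStep_subset {G : DFG} {ein eout : Evidence}
    (hG : G.TauSound ein eout) (l : List ℕ) :
    ∀ (u : ℕ) (s : Set Place), s ⊆ tau (G.label u).evid →
      (u :: l).IsChain (fun a b => (a, b) ∈ G.edges) →
      l.foldl G.tsStep s ⊆ tau (G.label ((u :: l).getLast (List.cons_ne_nil _ _))).evid := by
  induction l with
  | nil => exact fun u s hs _ => hs
  | cons v l ih =>
    intro u s hs hc
    rw [List.isChain_cons_cons] at hc
    rw [List.foldl_cons, List.getLast_cons_cons, tsStep_eq_tamper]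
    exact ih v _ (((G.label v).tamper_mono hs).trans (hG.edge u v hc.1)) hc.2

end DFG

theorem tauSound_sem (t : Phrase) (p : Place) (φ : List ℕ) (e : Evidence) :
    (sem t p φ e).TauSound e (eval t p φ e) := by
  induction t generalizing p φ e with
  | meas m q s => exact .single (fun _ => rfl) (Set.subset_univ _)
  | copy => exact .single (by simp [Label.IsMeas]) subset_rfl
  | sign => exact .single (by simp [Label.IsMeas]) subset_rfl
  | hash => exact .single (by simp [Label.IsMeas]) subset_rfl
  | att q t ih =>
    exact .seqComp (.single (by simp [Label.IsMeas]) subset_rfl)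
      (.seqComp (ih q (1 :: φ) e) (.single (by simp [Label.IsMeas]) subset_rfl))
  | lseq t1 t2 ih1 ih2 => exact .seqComp (ih1 _ _ _) (ih2 _ _ _)
  | bseq d1 d2 t1 t2 ih1 ih2 =>
    exact .branch (ih1 _ _ _) (ih2 _ _ _) (by simp [Label.IsMeas]) (by simp [Label.IsMeas])
      (fun _ => rfl) (fun _ => rfl) rfl Set.subset_union_left Set.subset_union_right
  | bpar d1 d2 t1 t2 ih1 ih2 =>
    exact .branch (ih1 _ _ _) (ih2 _ _ _) (by simp [Label.IsMeas]) (by simp [Label.IsMeas])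
      (fun _ => rfl) (fun _ => rfl) rfl Set.subset_union_left Set.subset_union_right

end Copland

open Copland in
/-- Tamper sets are overapproximated by tamper places: if `π = ⟨v1,…,vn⟩` is a
path of `D = C(t,p,φ,e)` starting with a measurement event, then
`ts(π) ⊆ τ(ε(vn))`. -/
theorem ts_subset_tau (t : Phrase) (p : Place) (φ : List ℕ) (e : Evidence)
    (π : List ℕ) (hπ : (sem t p φ e).IsPath π)
    (hm : ∀ v, π.head? = some v → ((sem t p φ e).label v).IsMeas) :
    ∀ vn, π.getLast? = some vn →
      (sem t p φ e).ts π ⊆ tau (((sem t p φ e).label vn).evid) := by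
  intro vn hvn
  obtain ⟨hne, -, hchain⟩ := hπ
  obtain - | ⟨v, rest⟩ := π
  · exact absurd rfl hne
  have hG := tauSound_sem t p φ e
  rw [List.getLast?_eq_some_getLast hne, Option.some_inj] at hvn
  subst hvn
  refine hG.foldl_tsStep_subset rest v _ ?_ hchain
  rw [hG.meas v (hm v rfl)]
  exact Set.subset_univ _
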